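/- arXiv:2304.02863 — 3 statements merged into one kernel-verified Lean document; each statement's English description precedes it below -/
import Mathlib

section
/- Let Γ act on X as described, and assume in addition that the support of μ is all of X. Then the following are equivalent: (a) for every o ∈ X and every Γ-invariant measurable function g : X × X → [0,∞] one has ∫_X g(o, x) dμ(x) = ∫_X g(x, o) dμ(x) (the mass transport principle); (b) Γ acts transitively on X and Γ is unimodular. -/
open MeasureTheory ENNReal

/-!
Push a right Haar measure on `Γ` forward to a measure `ρ_o` on `X` along the orbit map `γ ↦ γ • o`.
The mass transport principle for the averaged kernels `(x, y) ↦ ∫ f (γ • x) h (γ • y) dγ` says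
exactly that `ρ_o` is proportional to `μ`.  As `ρ_o` lives on the orbit of `o` and `μ` has full
support, this forces transitivity; as `μ` is invariant, so is `ρ_o`, and by uniqueness of Haar
measure the right Haar measure is then left-invariant too.  Conversely, for a transitive unimodular
action unfolding a double integral gives back the proportionality, and the inversion `γ ↦ γ⁻¹`
exchanges `∫ g (o, ·) dρ_o` and `∫ g (·, o) dρ_o`.
-/

section HaarUniqueness

variable {G : Type*} [Group G] [TopologicalSpace G] [IsTopologicalGroup G]
  [LocallyCompactSpace G] [SigmaCompactSpace G] [MeasurableSpace G] [BorelSpace G]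

theorem eq_haarScalarFactor_smul_of_sigmaCompactSpace (ν' ν : Measure G) [ν.IsHaarMeasure]
    [IsFiniteMeasureOnCompacts ν'] [ν'.IsMulLeftInvariant] :
    ν' = ν'.haarScalarFactor ν • ν := by
  refine (Measure.ext_iff_of_iUnion_eq_univ (iUnion_compactCovering G)).2 fun n => ?_
  ext s hs
  have hcompact : IsCompact (closure (s ∩ compactCovering G n)) :=
    (isCompact_compactCovering G n).closure_of_subset Set.inter_subset_right
  rw [Measure.restrict_apply hs, Measure.restrict_apply hs, Measure.smul_apply]
  exact Measure.measure_isMulInvariant_eq_smul_of_isCompact_closure ν' ν hcompact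

theorem eq_of_isMulLeftInvariant_of_measure_eq (ν' ν : Measure G) [ν.IsHaarMeasure]
    [IsFiniteMeasureOnCompacts ν'] [ν'.IsMulLeftInvariant] {s : Set G} (hs0 : ν s ≠ 0)
    (hs : ν s ≠ ∞) (h : ν' s = ν s) : ν' = ν := by
  have hsmul := eq_haarScalarFactor_smul_of_sigmaCompactSpace ν' ν
  have hfactor : ν'.haarScalarFactor ν = 1 := by
    rw [hsmul, Measure.smul_apply, ENNReal.smul_def, smul_eq_mul] at h
    exact ENNReal.coe_eq_one.1 ((ENNReal.mul_eq_right hs0 hs).1 h)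
  rwa [hfactor, one_smul] at hsmul

theorem isInvInvariant_of_isMulRightInvariant (ν : Measure G) [ν.IsHaarMeasure]
    [ν.IsMulRightInvariant] : ν.IsInvInvariant := by
  obtain ⟨K, hK, hK1⟩ := exists_compact_mem_nhds (1 : G)
  have : IsFiniteMeasureOnCompacts ν.inv :=
    ⟨fun C hC => by simpa only [Measure.inv_apply] using hC.inv.measure_lt_top⟩
  refine ⟨eq_of_isMulLeftInvariant_of_measure_eq ν.inv ν (s := K ∪ K⁻¹) ?_ ?_ ?_⟩
  · exact (Measure.measure_pos_of_mem_nhds ν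
      (Filter.mem_of_superset hK1 Set.subset_union_left)).ne'
  · exact (hK.union hK.inv).measure_lt_top.ne
  · rw [Measure.inv_apply, Set.union_inv, inv_inv, Set.union_comm]

end HaarUniqueness

/-- The mass transport principle for the action of `G` on `(X, μ)`: from every point, the expected
mass sent equals the expected mass received, for every diagonally invariant transport kernel `g`. -/
def MassTransportPrinciple (G : Type*) {X : Type*} [SMul G X] [MeasurableSpace X]
    (μ : Measure X) : Prop :=
  ∀ g : X → X → ℝ≥0∞, Measurable (Function.uncurry g) →
    (∀ (γ : G) (x y : X), g (γ • x) (γ • y) = g x y) →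
    ∀ o : X, ∫⁻ x, g o x ∂μ = ∫⁻ x, g x o ∂μ

/-- The image on `X` of a measure `ρ` on `G` under the orbit map `γ ↦ γ • o`.  In the applications
`ρ` is right-invariant, so that the result depends on the orbit of `o` only. -/
noncomputable def orbitMeasure {G X : Type*} [SMul G X] [MeasurableSpace G] [MeasurableSpace X]
    (ρ : Measure G) (o : X) : Measure X :=
  ρ.map fun γ => γ • o

/-- The average over the diagonal action of `G` of the product kernel `(x, y) ↦ f x * h y`.  It is
the source of invariant kernels to which the mass transport principle is applied. -/
noncomputable def diagonalAverage {G X : Type*} [SMul G X] [MeasurableSpace G]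
    (ρ : Measure G) (f h : X → ℝ≥0∞) (x y : X) : ℝ≥0∞ :=
  ∫⁻ γ, f (γ • x) * h (γ • y) ∂ρ

section Proportionality

variable {X : Type*} [MeasurableSpace X] {μ ν : Measure X}

theorem measure_smul_measure_eq_of_lintegral_mul_eq
    (H : ∀ f h : X → ℝ≥0∞, Measurable f → Measurable h →
      (∫⁻ x, f x ∂ν) * ∫⁻ x, h x ∂μ = (∫⁻ x, h x ∂ν) * ∫⁻ x, f x ∂μ)
    {A : Set X} (hA : MeasurableSet A) : ν A • μ = μ A • ν := by
  ext B hB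
  simpa only [Measure.smul_apply, smul_eq_mul, lintegral_indicator_one hA,
    lintegral_indicator_one hB, mul_comm (μ A)] using
    H _ _ (measurable_one.indicator hA) (measurable_one.indicator hB)

theorem smulInvariantMeasure_of_smul_eq_smul {G : Type*} [SMul G X] [SMulInvariantMeasure G X μ]
    {a b : ℝ≥0∞} (hb0 : b ≠ 0) (hb : b ≠ ∞) (h : a • μ = b • ν) :
    SMulInvariantMeasure G X ν := by
  have hinv : SMulInvariantMeasure G X (b • ν) := h ▸ inferInstance
  exact ⟨fun σ _ hB => (ENNReal.mul_right_inj hb0 hb).1 (hinv.measure_preimage_smul σ hB)⟩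

end Proportionality

section DiagonalAverage

variable {G X : Type*} [Group G] [MeasurableSpace G] [MulAction G X] {ρ : Measure G}
  {f h : X → ℝ≥0∞}

theorem diagonalAverage_comm (x y : X) :
    diagonalAverage ρ f h x y = diagonalAverage ρ h f y x := by
  simp only [diagonalAverage, mul_comm]

theorem diagonalAverage_smul_smul [MeasurableMul G] [ρ.IsMulRightInvariant] (σ : G) (x y : X) :
    diagonalAverage ρ f h (σ • x) (σ • y) = diagonalAverage ρ f h x y := by
  simp only [diagonalAverage, smul_smul]
  exact lintegral_mul_right_eq_self (fun γ => f (γ • x) * h (γ • y)) σ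

end DiagonalAverage

section MeasurableAction

variable {G X : Type*} [Group G] [MeasurableSpace G] [MeasurableSpace X] [MulAction G X]
  [MeasurableSMul₂ G X] {ρ : Measure G} {μ : Measure X} {f h : X → ℝ≥0∞}

theorem orbitMeasure_apply (o : X) {A : Set X} (hA : MeasurableSet A) :
    orbitMeasure ρ o A = ρ {γ | γ • o ∈ A} :=
  Measure.map_apply (measurable_smul_const o) hA

theorem lintegral_orbitMeasure (o : X) (hf : Measurable f) :
    ∫⁻ x, f x ∂orbitMeasure ρ o = ∫⁻ γ, f (γ • o) ∂ρ :=
  lintegral_map hf (measurable_smul_const o)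

theorem orbitMeasure_smul [MeasurableMul G] [ρ.IsMulRightInvariant] (σ : G) (o : X) :
    orbitMeasure ρ (σ • o) = orbitMeasure ρ o := by
  rw [orbitMeasure, orbitMeasure]
  conv_rhs => rw [← map_mul_right_eq_self ρ σ,
    Measure.map_map (measurable_smul_const o) (measurable_mul_const σ)]
  simp only [Function.comp_def, mul_smul]

theorem orbitMeasure_compl_orbit (o : X) (hO : MeasurableSet (MulAction.orbit G o)) :
    orbitMeasure ρ o (MulAction.orbit G o)ᶜ = 0 := by
  simp [orbitMeasure_apply o hO.compl, MulAction.mem_orbit]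

theorem lintegral_orbitMeasure_swap [MeasurableInv G] [ρ.IsInvInvariant] {g : X → X → ℝ≥0∞}
    (hg : Measurable (Function.uncurry g))
    (hinv : ∀ (γ : G) (x y : X), g (γ • x) (γ • y) = g x y) (o : X) :
    ∫⁻ x, g o x ∂orbitMeasure ρ o = ∫⁻ x, g x o ∂orbitMeasure ρ o :=
  calc ∫⁻ x, g o x ∂orbitMeasure ρ o
      = ∫⁻ γ, g o (γ • o) ∂ρ := lintegral_orbitMeasure o hg.of_uncurry_left
    _ = ∫⁻ γ : G, g o (γ⁻¹ • o) ∂ρ := (lintegral_inv_eq_self fun γ => g o (γ • o)).symm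
    _ = ∫⁻ γ : G, g (γ • o) o ∂ρ :=
        lintegral_congr fun γ => by rw [← hinv γ, smul_inv_smul]
    _ = ∫⁻ x, g x o ∂orbitMeasure ρ o := (lintegral_orbitMeasure o hg.of_uncurry_right).symm

theorem measurable_uncurry_diagonalAverage [SFinite ρ] (hf : Measurable f) (hh : Measurable h) :
    Measurable (Function.uncurry (diagonalAverage ρ f h)) :=
  Measurable.lintegral_prod_right' (f := fun p : (X × X) × G => f (p.2 • p.1.1) * h (p.2 • p.1.2))
    (by fun_prop)

theorem lintegral_diagonalAverage [SFinite ρ] [SFinite μ] [SMulInvariantMeasure G X μ]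
    (hf : Measurable f) (hh : Measurable h) (o : X) :
    ∫⁻ y, diagonalAverage ρ f h o y ∂μ
      = (∫⁻ x, f x ∂orbitMeasure ρ o) * ∫⁻ x, h x ∂μ :=
  calc ∫⁻ y, diagonalAverage ρ f h o y ∂μ
      = ∫⁻ γ, ∫⁻ y, f (γ • o) * h (γ • y) ∂μ ∂ρ := lintegral_lintegral_swap (by fun_prop)
    _ = ∫⁻ γ, f (γ • o) * ∫⁻ y, h y ∂μ ∂ρ := by
        refine lintegral_congr fun γ => ?_
        rw [lintegral_const_mul _ (by fun_prop), (measurePreserving_smul γ μ).lintegral_comp hh]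
    _ = (∫⁻ x, f x ∂orbitMeasure ρ o) * ∫⁻ x, h x ∂μ := by
        rw [lintegral_mul_const _ (by fun_prop), lintegral_orbitMeasure o hf]

theorem lintegral_lintegral_orbitMeasure_mul [MeasurableInv G] [SFinite ρ] [SFinite μ]
    [SMulInvariantMeasure G X μ] (hf : Measurable f) (hh : Measurable h) :
    ∫⁻ x, (∫⁻ y, f y ∂orbitMeasure ρ x) * h x ∂μ
      = ∫⁻ x, f x * ∫⁻ y, h y ∂orbitMeasure ρ.inv x ∂μ :=
  calc ∫⁻ x, (∫⁻ y, f y ∂orbitMeasure ρ x) * h x ∂μ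
      = ∫⁻ x, ∫⁻ γ, f (γ • x) * h x ∂ρ ∂μ := by
        refine lintegral_congr fun x => ?_
        rw [lintegral_orbitMeasure x hf, lintegral_mul_const _ (by fun_prop)]
    _ = ∫⁻ γ, ∫⁻ x, f (γ • x) * h x ∂μ ∂ρ := lintegral_lintegral_swap (by fun_prop)
    _ = ∫⁻ γ : G, ∫⁻ x, f x * h (γ⁻¹ • x) ∂μ ∂ρ := by
        refine lintegral_congr fun γ => ?_
        simpa only [inv_smul_smul] using (measurePreserving_smul γ μ).lintegral_comp
          (f := fun x => f x * h (γ⁻¹ • x)) (by fun_prop)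
    _ = ∫⁻ x, ∫⁻ γ : G, f x * h (γ⁻¹ • x) ∂ρ ∂μ := lintegral_lintegral_swap (by fun_prop)
    _ = ∫⁻ x, f x * ∫⁻ y, h y ∂orbitMeasure ρ.inv x ∂μ := by
        refine lintegral_congr fun x => ?_
        rw [lintegral_const_mul _ (by fun_prop), lintegral_orbitMeasure x hh, Measure.inv_def,
          lintegral_map (by fun_prop) measurable_inv]

theorem MassTransportPrinciple.orbitMeasure_smul_eq [MeasurableMul G] [SFinite ρ]
    [ρ.IsMulRightInvariant] [SFinite μ] [SMulInvariantMeasure G X μ]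
    (hmtp : MassTransportPrinciple G μ) (o : X) {A : Set X} (hA : MeasurableSet A) :
    orbitMeasure ρ o A • μ = μ A • orbitMeasure ρ o := by
  refine measure_smul_measure_eq_of_lintegral_mul_eq (fun f h hf hh => ?_) hA
  rw [← lintegral_diagonalAverage hf hh, ← lintegral_diagonalAverage hh hf,
    hmtp _ (measurable_uncurry_diagonalAverage hf hh) diagonalAverage_smul_smul]
  simp only [diagonalAverage_comm (f := f)]

theorem orbitMeasure_smul_eq_of_isPretransitive [MulAction.IsPretransitive G X] [MeasurableMul G]
    [MeasurableInv G] [SFinite ρ] [ρ.IsMulRightInvariant] [ρ.IsInvInvariant] [SFinite μ]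
    [SMulInvariantMeasure G X μ] (o : X) {A : Set X} (hA : MeasurableSet A) :
    orbitMeasure ρ o A • μ = μ A • orbitMeasure ρ o := by
  have hconst (x : X) : orbitMeasure ρ x = orbitMeasure ρ o := by
    obtain ⟨σ, rfl⟩ := MulAction.exists_smul_eq G o x
    exact orbitMeasure_smul σ o
  refine measure_smul_measure_eq_of_lintegral_mul_eq (fun f h hf hh => ?_) hA
  have hunfold := lintegral_lintegral_orbitMeasure_mul (ρ := ρ) (μ := μ) hf hh
  simp only [Measure.inv_eq_self, hconst] at hunfold
  rwa [lintegral_const_mul _ hh, lintegral_mul_const _ hf, mul_comm (∫⁻ x, f x ∂μ)] at hunfold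

end MeasurableAction

section ProperAction

variable {G X : Type*} [Group G] [TopologicalSpace G] [TopologicalSpace X] [MulAction G X]
  [ProperSMul G X]

theorem isCompact_setOf_smul_mem (o : X) {K : Set X} (hK : IsCompact K) :
    IsCompact {γ : G | γ • o ∈ K} := by
  have himage := (ProperSMul.isProperMap_smul_pair.isCompact_preimage
    (hK.prod (isCompact_singleton (x := o)))).image (continuous_fst (X := G))
  convert himage using 1
  ext γ
  simp

theorem isClosed_orbit [T1Space X] (o : X) : IsClosed (MulAction.orbit G o) := by
  have hclosed := ProperSMul.isProperMap_smul_pair.isClosedMap _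
    ((isClosed_singleton (x := o)).preimage (continuous_snd (X := G)))
  convert hclosed.preimage (Continuous.prodMk_left o) using 1
  ext x
  simp [MulAction.mem_orbit_iff]

theorem setOf_smul_mem_mem_nhds_one {o : X} {K : Set X} (hK : K ∈ nhds o) :
    {γ : G | γ • o ∈ K} ∈ nhds 1 :=
  (continuous_id.smul continuous_const).continuousAt.preimage_mem_nhds (by simpa using hK)

variable [MeasurableSpace G] [BorelSpace G] [SecondCountableTopology X] [T2Space X]
  [MeasurableSpace X] [BorelSpace X]

theorem MassTransportPrinciple.isPretransitive [ContinuousMul G] (ρ : Measure G) [NeZero ρ]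
    [SFinite ρ] [ρ.IsMulRightInvariant] {μ : Measure X} [SFinite μ] [μ.IsOpenPosMeasure]
    [SMulInvariantMeasure G X μ]
    (hmtp : MassTransportPrinciple G μ) : MulAction.IsPretransitive G X := by
  refine ⟨fun o p => ?_⟩
  have hO : IsClosed (MulAction.orbit G o) := isClosed_orbit o
  have hnull : μ (MulAction.orbit G o)ᶜ = 0 := by
    simpa [orbitMeasure_compl_orbit o hO.measurableSet, orbitMeasure_apply o MeasurableSet.univ,
      NeZero.ne ρ] using congrArg (· (MulAction.orbit G o)ᶜ)
        (hmtp.orbitMeasure_smul_eq (ρ := ρ) o MeasurableSet.univ)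
  have huniv : MulAction.orbit G o = Set.univ :=
    Set.compl_empty_iff.1 ((hO.isOpen_compl.measure_eq_zero_iff μ).1 hnull)
  exact huniv.symm.subset (Set.mem_univ p)

variable [IsTopologicalGroup G] [LocallyCompactSpace G] [SigmaCompactSpace G]
  [WeaklyLocallyCompactSpace X] (ν : Measure G) [ν.IsHaarMeasure]

theorem isMulRightInvariant_of_smulInvariantMeasure_orbitMeasure (o : X)
    [SMulInvariantMeasure G X (orbitMeasure ν.inv o)] : ν.IsMulRightInvariant := by
  obtain ⟨K, hK, hKo⟩ := exists_compact_mem_nhds o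
  refine ⟨fun σ => eq_of_isMulLeftInvariant_of_measure_eq _ ν (s := {γ : G | γ • o ∈ K}⁻¹) ?_ ?_ ?_⟩
  · exact (Measure.measure_pos_of_mem_nhds ν
      (inv_mem_nhds_one G (setOf_smul_mem_mem_nhds_one hKo))).ne'
  · exact (isCompact_setOf_smul_mem o hK).inv.measure_lt_top.ne
  · have hinv := measure_preimage_smul (orbitMeasure ν.inv o) σ⁻¹ K
    rw [orbitMeasure_apply o (measurable_const_smul σ⁻¹ hK.measurableSet),
      orbitMeasure_apply o hK.measurableSet, Measure.inv_apply, Measure.inv_apply] at hinv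
    rw [← hinv]
    refine ((MeasurableEquiv.mulRight σ).map_apply _).trans (congrArg ν ?_)
    ext γ
    simp [mul_smul]

variable {μ : Measure X} [IsFiniteMeasureOnCompacts μ] [SMulInvariantMeasure G X μ]

theorem MassTransportPrinciple.isMulRightInvariant [Nonempty X] [μ.IsOpenPosMeasure]
    (hmtp : MassTransportPrinciple G μ) : ν.IsMulRightInvariant := by
  obtain ⟨o⟩ := ‹Nonempty X›
  obtain ⟨K, hK, hKo⟩ := exists_compact_mem_nhds o
  have : SMulInvariantMeasure G X (orbitMeasure ν.inv o) :=
    smulInvariantMeasure_of_smul_eq_smul (Measure.measure_pos_of_mem_nhds μ hKo).ne'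
      hK.measure_lt_top.ne (hmtp.orbitMeasure_smul_eq o hK.measurableSet)
  exact isMulRightInvariant_of_smulInvariantMeasure_orbitMeasure ν o

theorem massTransportPrinciple_of_isPretransitive [MulAction.IsPretransitive G X]
    [ν.IsMulRightInvariant] : MassTransportPrinciple G μ := by
  intro g hg hinv o
  have := isInvInvariant_of_isMulRightInvariant ν
  obtain ⟨K, hK, hKo⟩ := exists_compact_mem_nhds o
  have hprop := orbitMeasure_smul_eq_of_isPretransitive (ρ := ν) (μ := μ) o hK.measurableSet
  have hK0 : orbitMeasure ν o K ≠ 0 := by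
    rw [orbitMeasure_apply o hK.measurableSet]
    exact (Measure.measure_pos_of_mem_nhds ν (setOf_smul_mem_mem_nhds_one hKo)).ne'
  have hKtop : orbitMeasure ν o K ≠ ∞ := by
    rw [orbitMeasure_apply o hK.measurableSet]
    exact (isCompact_setOf_smul_mem o hK).measure_lt_top.ne
  refine (ENNReal.mul_right_inj hK0 hKtop).1 ?_
  simp only [← smul_eq_mul, ← lintegral_smul_measure, hprop]
  simp only [lintegral_smul_measure, lintegral_orbitMeasure_swap hg hinv]

end ProperAction

theorem stmt0_general {Γ : Type*} [Group Γ] [TopologicalSpace Γ] [IsTopologicalGroup Γ]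
    [LocallyCompactSpace Γ] [SigmaCompactSpace Γ] [MeasurableSpace Γ] [BorelSpace Γ]
    {X : Type*} [TopologicalSpace X] [T2Space X] [WeaklyLocallyCompactSpace X]
    [SecondCountableTopology X] [Nonempty X] [MeasurableSpace X] [BorelSpace X]
    [MulAction Γ X] [ProperSMul Γ X] (haar : Measure Γ) [haar.IsHaarMeasure]
    (μ : Measure X) [IsFiniteMeasureOnCompacts μ] [μ.IsOpenPosMeasure]
    [SMulInvariantMeasure Γ X μ] :
    MassTransportPrinciple Γ μ ↔
      MulAction.IsPretransitive Γ X ∧ haar.IsMulRightInvariant :=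
  ⟨fun hmtp => ⟨hmtp.isPretransitive haar.inv, hmtp.isMulRightInvariant haar⟩,
    fun ⟨_, _⟩ => massTransportPrinciple_of_isPretransitive haar⟩

/-- Let `Γ` be a locally compact, σ-compact Hausdorff topological group with a
left Haar measure `haar`, acting continuously, properly, by `μ`-preserving isometries on a proper
metric space `X`, where `μ` is a nonzero Borel measure on `X` that is finite on bounded sets and
has full support.  Then the mass transport principle (for every root `o` and every `Γ`-invariant
measurable `g : X × X → [0,∞]`) holds if and only if `Γ` acts transitively on `X` and `Γ` is
unimodular (its left Haar measure is also right-invariant). -/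
theorem stmt0 {Γ : Type*} [Group Γ] [TopologicalSpace Γ] [IsTopologicalGroup Γ]
    [LocallyCompactSpace Γ] [SigmaCompactSpace Γ] [T2Space Γ]
    [MeasurableSpace Γ] [BorelSpace Γ]
    {X : Type*} [MetricSpace X] [ProperSpace X] [MeasurableSpace X] [BorelSpace X]
    [MulAction Γ X] [ContinuousSMul Γ X]
    (haar : Measure Γ) [haar.IsHaarMeasure]
    (μ : Measure X) (hμ0 : μ ≠ 0)
    (hμfin : ∀ s : Set X, Bornology.IsBounded s → μ s < ⊤)
    (hiso : ∀ γ : Γ, Isometry fun x : X => γ • x)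
    (hpres : ∀ γ : Γ, Measure.map (fun x : X => γ • x) μ = μ)
    (hproper : IsProperMap fun p : Γ × X => (p.1 • p.2, p.2))
    (hsupp : ∀ U : Set X, IsOpen U → U.Nonempty → 0 < μ U) :
    (∀ g : X → X → ℝ≥0∞, Measurable (Function.uncurry g) →
        (∀ (γ : Γ) (x y : X), g (γ • x) (γ • y) = g x y) →
        ∀ o : X, ∫⁻ x, g o x ∂μ = ∫⁻ x, g x o ∂μ) ↔
      (MulAction.IsPretransitive Γ X ∧ haar.IsMulRightInvariant) := by
  have : ProperSMul Γ X := ⟨hproper⟩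
  have : SMulInvariantMeasure Γ X μ := ((smulInvariantMeasure_tfae Γ μ).out 0 5).2 hpres
  have : IsFiniteMeasureOnCompacts μ := ⟨fun K hK => hμfin K hK.isBounded⟩
  have : μ.IsOpenPosMeasure := ⟨fun U hU hne => (hsupp U hU hne).ne'⟩
  have : Nonempty X := not_isEmpty_iff.1 fun _ => hμ0 μ.eq_zero_of_isEmpty
  exact stmt0_general haar μ
end

section
/- The function h is well defined with 0 < h(x) < ∞ for every x ∈ X, h is Borel measurable and Γ-invariant (h(γx) = h(x)), and for every measurable function f : X → [0,∞] one has ∫_X f dμ = ∫_B h(x) (∫_Γ f(γx) dγ) dμ(x), where dγ denotes integration with respect to the left Haar measure of Γ. -/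
open MeasureTheory ENNReal

/-!
For measurable `g ≥ 0`, Tonelli and the invariance of `μ` give
`∫_X g(x) ‖Γ_{x,B}‖ dμ = ∫_Γ ∫_{γB} g dμ dγ = ∫_Γ ∫_B g(γx) dμ dγ = ∫_B ∫_Γ g(γx) dγ dμ`.
Left invariance of the Haar measure makes `h(x) = ‖Γ_{x,B}‖⁻¹` constant on orbits, so taking
`g = h f` and moving `h` out of the integral over `Γ` yields the formula. The nonempty open set
`Γ_{x,B}` has positive measure; its inverse carries the point `x` into the relatively compact set
`Γx ∩ B`, so by properness its measure is finite.
-/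

section Defs

variable {Γ X : Type*} [Group Γ] [MulAction Γ X]

variable (Γ) in
/-- The set `Γ_{x,B}` of all `γ` whose translate `γB` contains `x`. -/
def hittingSet (B : Set X) (x : X) : Set Γ := {γ | γ⁻¹ • x ∈ B}

/-- The weight `h(x) = ‖Γ_{x,B}‖⁻¹`, with which the orbit of `x` meets `B` in total mass one. As
an extended nonnegative real it is `∞` where `‖Γ_{x,B}‖ = 0` and `0` where `‖Γ_{x,B}‖ = ∞`. -/
noncomputable def orbitWeight [MeasurableSpace Γ] (ν : Measure Γ) (B : Set X) (x : X) : ℝ≥0∞ :=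
  (ν (hittingSet Γ B x))⁻¹

theorem preimage_mul_left_hittingSet_smul (B : Set X) (γ : Γ) (x : X) :
    (γ * ·) ⁻¹' hittingSet Γ B (γ • x) = hittingSet Γ B x := by
  ext
  simp [hittingSet, mul_smul]

theorem orbitWeight_smul [MeasurableSpace Γ] [MeasurableMul Γ] (ν : Measure Γ)
    [ν.IsMulLeftInvariant] (B : Set X) (γ : Γ) (x : X) :
    orbitWeight ν B (γ • x) = orbitWeight ν B x := by
  rw [orbitWeight, ← measure_preimage_mul ν γ, preimage_mul_left_hittingSet_smul, orbitWeight]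

end Defs

section Measurable

open scoped Pointwise

variable {Γ X : Type*} [Group Γ] [MeasurableSpace Γ] [MeasurableInv Γ] [MeasurableSpace X]
  [MulAction Γ X] [MeasurableSMul₂ Γ X] {B : Set X}

theorem measurableSet_setOf_mem_hittingSet (hB : MeasurableSet B) :
    MeasurableSet {p : X × Γ | p.2 ∈ hittingSet Γ B p.1} :=
  (measurable_snd.inv.smul measurable_fst) hB

theorem measurable_orbitWeight (ν : Measure Γ) [SFinite ν] (hB : MeasurableSet B) :
    Measurable (orbitWeight ν B) :=
  (measurable_measure_prodMk_left (measurableSet_setOf_mem_hittingSet hB)).inv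

theorem lintegral_mul_measure_hittingSet (ν : Measure Γ) [SFinite ν] (μ : Measure X) [SFinite μ]
    [SMulInvariantMeasure Γ X μ] (hB : MeasurableSet B) {g : X → ℝ≥0∞} (hg : Measurable g) :
    ∫⁻ x, g x * ν (hittingSet Γ B x) ∂μ = ∫⁻ x in B, ∫⁻ γ, g (γ • x) ∂ν ∂μ := by
  have hhit : MeasurableSet {p : X × Γ | p.2 ∈ hittingSet Γ B p.1} :=
    measurableSet_setOf_mem_hittingSet hB
  calc ∫⁻ x, g x * ν (hittingSet Γ B x) ∂μ
      = ∫⁻ x, ∫⁻ γ, {p : X × Γ | p.2 ∈ hittingSet Γ B p.1}.indicator (g ∘ Prod.fst) (x, γ)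
          ∂ν ∂μ := by
        refine lintegral_congr fun x => ?_
        exact (lintegral_indicator_const (measurable_prodMk_left hhit) (g x)).symm
    _ = ∫⁻ γ, ∫⁻ x, {p : X × Γ | p.2 ∈ hittingSet Γ B p.1}.indicator (g ∘ Prod.fst) (x, γ)
          ∂μ ∂ν :=
        lintegral_lintegral_swap ((hg.comp measurable_fst).indicator hhit).aemeasurable
    _ = ∫⁻ γ, ∫⁻ x in γ • B, g x ∂μ ∂ν := by
        refine lintegral_congr fun γ => ?_
        rw [← Set.preimage_smul_inv]
        exact lintegral_indicator (measurable_prodMk_right hhit) g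
    _ = ∫⁻ γ, ∫⁻ x in B, g (γ • x) ∂μ ∂ν := by
        refine lintegral_congr fun γ => ?_
        exact ((measurePreserving_smul γ μ).setLIntegral_comp_emb
          (measurableEmbedding_const_smul γ) g B).symm
    _ = ∫⁻ x in B, ∫⁻ γ, g (γ • x) ∂ν ∂μ :=
        lintegral_lintegral_swap (hg.comp measurable_smul).aemeasurable

theorem lintegral_eq_setLIntegral_orbitWeight_mul [MeasurableMul Γ] (ν : Measure Γ) [SFinite ν]
    [ν.IsMulLeftInvariant] (μ : Measure X) [SFinite μ] [SMulInvariantMeasure Γ X μ]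
    (hB : MeasurableSet B) (hν_ne_zero : ∀ᵐ x ∂μ, ν (hittingSet Γ B x) ≠ 0)
    (hν_ne_top : ∀ᵐ x ∂μ, ν (hittingSet Γ B x) ≠ ∞) {f : X → ℝ≥0∞} (hf : Measurable f) :
    ∫⁻ x, f x ∂μ = ∫⁻ x in B, orbitWeight ν B x * ∫⁻ γ, f (γ • x) ∂ν ∂μ := by
  calc ∫⁻ x, f x ∂μ
      = ∫⁻ x, orbitWeight ν B x * f x * ν (hittingSet Γ B x) ∂μ := by
        refine lintegral_congr_ae ?_
        filter_upwards [hν_ne_zero, hν_ne_top] with x hx_ne_zero hx_ne_top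
        rw [mul_right_comm, orbitWeight, ENNReal.inv_mul_cancel hx_ne_zero hx_ne_top, one_mul]
    _ = ∫⁻ x in B, ∫⁻ γ, orbitWeight ν B (γ • x) * f (γ • x) ∂ν ∂μ :=
        lintegral_mul_measure_hittingSet ν μ hB ((measurable_orbitWeight ν hB).mul hf)
    _ = ∫⁻ x in B, orbitWeight ν B x * ∫⁻ γ, f (γ • x) ∂ν ∂μ := by
        refine lintegral_congr fun x => ?_
        simp only [orbitWeight_smul]
        exact lintegral_const_mul _ (hf.comp (measurable_smul_const x))

end Measurable

section Topological

open scoped Pointwise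

variable {Γ X : Type*} [Group Γ] [TopologicalSpace Γ] [MeasurableSpace Γ] [TopologicalSpace X]
  [MulAction Γ X] {B : Set X} {x : X}

theorem measure_hittingSet_pos [ContinuousInv Γ] [ContinuousSMul Γ X] (ν : Measure Γ)
    [ν.IsOpenPosMeasure] (hB : IsOpen B) (hx : (MulAction.orbit Γ x ∩ B).Nonempty) :
    0 < ν (hittingSet Γ B x) := by
  obtain ⟨_, ⟨γ, rfl⟩, hγ⟩ := hx
  have hopen : IsOpen (hittingSet Γ B x) :=
    hB.preimage (continuous_inv.smul continuous_const)
  exact hopen.measure_pos ν ⟨γ⁻¹, by simpa [hittingSet] using hγ⟩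

theorem measure_hittingSet_lt_top [ContinuousInv Γ] [ProperSMul Γ X] (ν : Measure Γ)
    [IsFiniteMeasureOnCompacts ν] {K : Set X} (hK : IsCompact K)
    (hBK : MulAction.orbit Γ x ∩ B ⊆ K) : ν (hittingSet Γ B x) < ∞ := by
  have hcompact : IsCompact {γ : Γ | (γ • {x} ∩ K).Nonempty} :=
    ProperSMul.isCompact_setOfPred_inter_nonempty isCompact_singleton hK
  have hsubset : hittingSet Γ B x ⊆ {γ : Γ | (γ • {x} ∩ K).Nonempty}⁻¹ := fun γ hγ =>
    ⟨γ⁻¹ • x, Set.smul_mem_smul_set rfl, hBK ⟨⟨γ⁻¹, rfl⟩, hγ⟩⟩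
  exact (measure_mono hsubset).trans_lt hcompact.inv.measure_lt_top

end Topological

theorem stmt1_general {Γ : Type*} [Group Γ] [TopologicalSpace Γ] [IsTopologicalGroup Γ]
    [SigmaCompactSpace Γ] [MeasurableSpace Γ] [BorelSpace Γ]
    {X : Type*} [TopologicalSpace X] [SecondCountableTopology X] [MeasurableSpace X]
    [BorelSpace X] [MulAction Γ X] [ProperSMul Γ X]
    (haar : Measure Γ) [haar.IsHaarMeasure]
    (μ : Measure X) [SFinite μ] [SMulInvariantMeasure Γ X μ]
    (B : Set X) (hB : IsOpen B)
    (hBmeet : ∀ x : X, (MulAction.orbit Γ x ∩ B).Nonempty)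
    (hBcompact : ∀ x : X, ∃ K, IsCompact K ∧ MulAction.orbit Γ x ∩ B ⊆ K) :
    (∀ x : X, 0 < haar (hittingSet Γ B x) ∧ haar (hittingSet Γ B x) < ∞) ∧
    Measurable (orbitWeight haar B) ∧
    (∀ (γ : Γ) (x : X), orbitWeight haar B (γ • x) = orbitWeight haar B x) ∧
    (∀ f : X → ℝ≥0∞, Measurable f →
      ∫⁻ x, f x ∂μ = ∫⁻ x in B, orbitWeight haar B x * (∫⁻ γ, f (γ • x) ∂haar) ∂μ) := by
  have hpos (x : X) : 0 < haar (hittingSet Γ B x) := measure_hittingSet_pos haar hB (hBmeet x)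
  have hlt_top (x : X) : haar (hittingSet Γ B x) < ∞ := by
    obtain ⟨K, hK, hBK⟩ := hBcompact x
    exact measure_hittingSet_lt_top haar hK hBK
  exact ⟨fun x => ⟨hpos x, hlt_top x⟩, measurable_orbitWeight haar hB.measurableSet,
    orbitWeight_smul haar B, fun f hf => lintegral_eq_setLIntegral_orbitWeight_mul haar μ
      hB.measurableSet (ae_of_all μ fun x => (hpos x).ne') (ae_of_all μ fun x => (hlt_top x).ne) hf⟩

/-- With `Γ` a locally compact, σ-compact Hausdorff group with left Haar
measure `haar`, acting continuously, properly, by `μ`-preserving isometries on a proper metric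
space `X` (with `μ` nonzero and finite on bounded sets), and `B ⊆ X` an open set meeting every
orbit in a nonempty bounded set, the function `h x := ‖{γ | γ⁻¹ • x ∈ B}‖⁻¹` is well defined with
`0 < h x < ∞`, is Borel measurable and `Γ`-invariant, and for every measurable `f : X → [0,∞]`
one has `∫ f dμ = ∫_B h x · (∫_Γ f (γ • x) dγ) dμ x`. -/
theorem stmt1 {Γ : Type*} [Group Γ] [TopologicalSpace Γ] [IsTopologicalGroup Γ]
    [LocallyCompactSpace Γ] [SigmaCompactSpace Γ] [T2Space Γ]
    [MeasurableSpace Γ] [BorelSpace Γ]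
    {X : Type*} [MetricSpace X] [ProperSpace X] [MeasurableSpace X] [BorelSpace X]
    [MulAction Γ X] [ContinuousSMul Γ X]
    (haar : Measure Γ) [haar.IsHaarMeasure]
    (μ : Measure X) (hμ0 : μ ≠ 0)
    (hμfin : ∀ s : Set X, Bornology.IsBounded s → μ s < ⊤)
    (hiso : ∀ γ : Γ, Isometry fun x : X => γ • x)
    (hpres : ∀ γ : Γ, Measure.map (fun x : X => γ • x) μ = μ)
    (hproper : IsProperMap fun p : Γ × X => (p.1 • p.2, p.2))
    (B : Set X) (hBopen : IsOpen B)
    (hBmeet : ∀ x : X, (MulAction.orbit Γ x ∩ B).Nonempty)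
    (hBbdd : ∀ x : X, Bornology.IsBounded (MulAction.orbit Γ x ∩ B)) :
    (∀ x : X, 0 < haar {γ : Γ | γ⁻¹ • x ∈ B} ∧ haar {γ : Γ | γ⁻¹ • x ∈ B} < ⊤) ∧
    Measurable (fun x : X => (haar {γ : Γ | γ⁻¹ • x ∈ B})⁻¹) ∧
    (∀ (γ₀ : Γ) (x : X),
      (haar {γ : Γ | γ⁻¹ • (γ₀ • x) ∈ B})⁻¹ = (haar {γ : Γ | γ⁻¹ • x ∈ B})⁻¹) ∧
    (∀ f : X → ℝ≥0∞, Measurable f →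
      ∫⁻ x, f x ∂μ
        = ∫⁻ x in B, (haar {γ : Γ | γ⁻¹ • x ∈ B})⁻¹ * (∫⁻ γ, f (γ • x) ∂haar) ∂μ) := by
  have : ProperSMul Γ X := ⟨hproper⟩
  have : IsFiniteMeasureOnCompacts μ := ⟨fun _ hK => hμfin _ hK.isBounded⟩
  have : SMulInvariantMeasure Γ X μ := ((smulInvariantMeasure_tfae Γ μ).out 0 5).2 hpres
  exact stmt1_general haar μ B hBopen hBmeet fun x =>
    ⟨_, (hBbdd x).isCompact_closure, subset_closure⟩
end

section
/- Assume Γ is unimodular and that a := ∫_B h dμ ∈ (0,∞). Then for every Γ-invariant measurable function g : X × X → [0,∞] one has ∫_B h(z) (∫_X g(z, y) dμ(y)) dμ(z) = ∫_B h(z) (∫_X g(y, z) dμ(y)) dμ(z). In other words, if a random root o is chosen in X with distribution a⁻¹·(h μ) restricted to B, then the mass transport principle E[∫_X g(o, y) dμ(y)] = E[∫_X g(y, o) dμ(y)] holds. -/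
/-!
Write `I f x = ∫ f (γ⁻¹ x) dγ` for the integral of `f` along the orbit of `x`. Since `μ` is
`Γ`-invariant and Haar measure is invariant under inversion, `I` is symmetric with respect to any
`Γ`-invariant kernel `φ`:
`∫∫ f x * φ x y * I k y = ∫∫ I f x * φ x y * k y`.
For `f = k = 1_B` one has `I f = h⁻¹`, so the kernel `φ x y = h x * h y * g x y` gives the mass
transport principle: one of its two weights cancels on each side.
-/

open MeasureTheory ENNReal

section Haar

variable {Γ : Type*} [Group Γ] [TopologicalSpace Γ] [IsTopologicalGroup Γ] [LocallyCompactSpace Γ]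
  [MeasurableSpace Γ] [BorelSpace Γ] (ν : Measure Γ) [ν.IsHaarMeasure] [ν.IsMulRightInvariant]

theorem haarScalarFactor_inv_self : Measure.haarScalarFactor ν.inv ν = 1 := by
  obtain ⟨K, hK, hK_nhds⟩ := exists_compact_mem_nhds (1 : Γ)
  have hsymm : (K ∪ K⁻¹)⁻¹ = K ∪ K⁻¹ := by rw [Set.union_inv, inv_inv, Set.union_comm]
  have hcompact : IsCompact (K ∪ K⁻¹) := hK.union hK.inv
  have hpos : ν (K ∪ K⁻¹) ≠ 0 :=
    (Measure.measure_pos_of_mem_nhds ν (Filter.mem_of_superset hK_nhds Set.subset_union_left)).ne'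
  have hscale : ν (K ∪ K⁻¹) = Measure.haarScalarFactor ν.inv ν * ν (K ∪ K⁻¹) := by
    simpa only [Measure.inv_apply, hsymm, ENNReal.smul_def, smul_eq_mul] using
      Measure.measure_isMulInvariant_eq_smul_of_isCompact_closure ν.inv ν hcompact.closure
  rw [← ENNReal.coe_eq_one]
  exact (ENNReal.mul_left_inj hpos hcompact.measure_ne_top).1 (by rw [← hscale, one_mul])

-- Mathlib's uniqueness of Haar measure without regularity only covers relatively compact sets;
-- σ-compactness extends it to all Borel sets.
theorem isInvInvariant_of_isMulRightInvariant_s2 [SigmaCompactSpace Γ] : ν.IsInvInvariant where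
  inv_eq_self := by
    refine Measure.ext_of_iUnion_eq_univ (iUnion_compactCovering Γ) fun n => ?_
    ext s hs
    have hcompact : IsCompact (closure (s ∩ compactCovering Γ n)) :=
      (isCompact_compactCovering Γ n).closure_of_subset Set.inter_subset_right
    rw [Measure.restrict_apply hs, Measure.restrict_apply hs,
      Measure.measure_isMulInvariant_eq_smul_of_isCompact_closure ν.inv ν hcompact,
      haarScalarFactor_inv_self, one_smul]

end Haar

section ReturnTimes

variable {Γ X : Type*} [Group Γ] [TopologicalSpace Γ] [IsTopologicalGroup Γ] [MeasurableSpace Γ]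
  [TopologicalSpace X] [MulAction Γ X] (ν : Measure Γ) {B : Set X} {x : X}

theorem measure_setOf_inv_smul_mem_ne_zero [ContinuousSMul Γ X] [ν.IsOpenPosMeasure]
    (hB : IsOpen B) (hx : (MulAction.orbit Γ x ∩ B).Nonempty) :
    ν {γ : Γ | γ⁻¹ • x ∈ B} ≠ 0 := by
  obtain ⟨_, ⟨γ, rfl⟩, hγ⟩ := hx
  have hopen : IsOpen {γ : Γ | γ⁻¹ • x ∈ B} :=
    hB.preimage (continuous_inv.smul continuous_const)
  exact hopen.measure_ne_zero ν ⟨γ⁻¹, by simpa using hγ⟩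

theorem measure_setOf_inv_smul_mem_ne_top [ProperSMul Γ X] [IsFiniteMeasureOnCompacts ν]
    (hx : IsCompact (closure (MulAction.orbit Γ x ∩ B))) :
    ν {γ : Γ | γ⁻¹ • x ∈ B} ≠ ∞ := by
  have hcompact := (ProperSMul.isCompact_setOfPred_inter_nonempty (G := Γ)
    (isCompact_singleton (x := x)) hx).inv
  refine measure_ne_top_of_subset (fun γ hγ => ?_) hcompact.measure_ne_top
  exact ⟨γ⁻¹ • x, Set.smul_mem_smul_set rfl, subset_closure ⟨⟨γ⁻¹, rfl⟩, hγ⟩⟩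

end ReturnTimes

section Lintegral

theorem lintegral_lintegral_lintegral_rotate {α β γ : Type*} [MeasurableSpace α]
    [MeasurableSpace β] [MeasurableSpace γ] (μ : Measure α) (ν : Measure β) (ρ : Measure γ)
    [SFinite μ] [SFinite ν] [SFinite ρ] {F : α → β → γ → ℝ≥0∞}
    (hF : Measurable fun p : (α × β) × γ => F p.1.1 p.1.2 p.2) :
    ∫⁻ a, ∫⁻ b, ∫⁻ c, F a b c ∂ρ ∂ν ∂μ = ∫⁻ c, ∫⁻ a, ∫⁻ b, F a b c ∂ν ∂μ ∂ρ := by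
  calc ∫⁻ a, ∫⁻ b, ∫⁻ c, F a b c ∂ρ ∂ν ∂μ
      = ∫⁻ p, ∫⁻ c, F p.1 p.2 c ∂ρ ∂μ.prod ν :=
        lintegral_lintegral hF.lintegral_prod_right'.aemeasurable
    _ = ∫⁻ c, ∫⁻ p, F p.1 p.2 c ∂μ.prod ν ∂ρ := lintegral_lintegral_swap hF.aemeasurable
    _ = ∫⁻ c, ∫⁻ a, ∫⁻ b, F a b c ∂ν ∂μ ∂ρ := lintegral_congr fun c =>
        lintegral_prod _ (hF.comp measurable_prodMk_right).aemeasurable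

theorem setLIntegral_eq_lintegral_indicator_one_mul {α : Type*} [MeasurableSpace α]
    (μ : Measure α) {s : Set α} (hs : MeasurableSet s) (f : α → ℝ≥0∞) :
    ∫⁻ a in s, f a ∂μ = ∫⁻ a, s.indicator 1 a * f a ∂μ := by
  simp only [← lintegral_indicator hs, ← Set.indicator_mul_left, Pi.one_apply, one_mul]

theorem lintegral_smul_eq_self {G α : Type*} [Group G] [MulAction G α] [MeasurableSpace α]
    [MeasurableConstSMul G α] (μ : Measure α) [SMulInvariantMeasure G α μ] (f : α → ℝ≥0∞) (g : G) :
    ∫⁻ a, f (g • a) ∂μ = ∫⁻ a, f a ∂μ :=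
  (measurePreserving_smul g μ).lintegral_comp_emb (measurableEmbedding_const_smul g) f

end Lintegral

/-- The integral of `f` along the orbit of `x` with respect to the measure `ν` on the group. The
inverse is chosen so that left invariance of `ν` makes this a `Γ`-invariant function of `x`. -/
noncomputable def orbitLIntegral {Γ X : Type*} [Group Γ] [MeasurableSpace Γ] [MulAction Γ X]
    (ν : Measure Γ) (f : X → ℝ≥0∞) (x : X) : ℝ≥0∞ :=
  ∫⁻ γ, f (γ⁻¹ • x) ∂ν

section OrbitLIntegral

variable {Γ X : Type*} [Group Γ] [MeasurableSpace Γ] [MulAction Γ X] (ν : Measure Γ)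

theorem orbitLIntegral_smul [MeasurableMul Γ] [ν.IsMulLeftInvariant]
    (f : X → ℝ≥0∞) (γ : Γ) (x : X) :
    orbitLIntegral ν f (γ • x) = orbitLIntegral ν f x := by
  simpa only [orbitLIntegral, mul_inv_rev, mul_smul, inv_smul_smul] using
    (lintegral_mul_left_eq_self (μ := ν) (fun δ => f (δ⁻¹ • γ • x)) γ).symm

variable [MeasurableInv Γ]

theorem orbitLIntegral_eq_lintegral_smul [ν.IsInvInvariant] (f : X → ℝ≥0∞) (x : X) :
    orbitLIntegral ν f x = ∫⁻ γ, f (γ • x) ∂ν :=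
  lintegral_inv_eq_self (μ := ν) fun γ => f (γ • x)

variable [MeasurableSpace X]

theorem orbitLIntegral_indicator_one [MeasurableSMul Γ X] {B : Set X} (hB : MeasurableSet B)
    (x : X) :
    orbitLIntegral ν (B.indicator 1) x = ν {γ : Γ | γ⁻¹ • x ∈ B} :=
  lintegral_indicator_one ((measurable_inv.smul_const x) hB)

variable [MeasurableSMul₂ Γ X] [SFinite ν]

theorem measurable_orbitLIntegral {f : X → ℝ≥0∞} (hf : Measurable f) :
    Measurable (orbitLIntegral ν f) :=
  Measurable.lintegral_prod_right' (f := fun p : X × Γ => f (p.2⁻¹ • p.1)) (by fun_prop)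

variable [ν.IsInvInvariant] (μ : Measure X) [SFinite μ] [SMulInvariantMeasure Γ X μ]
  {f k : X → ℝ≥0∞}

theorem lintegral_lintegral_mul_orbitLIntegral (hf : Measurable f) (hk : Measurable k)
    {φ : X → X → ℝ≥0∞} (hφ : Measurable (Function.uncurry φ))
    (hφ_inv : ∀ (γ : Γ) (x y : X), φ (γ • x) (γ • y) = φ x y) :
    ∫⁻ x, ∫⁻ y, f x * φ x y * orbitLIntegral ν k y ∂μ ∂μ
      = ∫⁻ x, ∫⁻ y, orbitLIntegral ν f x * φ x y * k y ∂μ ∂μ := by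
  have hdiagonal (γ : Γ) : ∫⁻ x, ∫⁻ y, f x * φ x y * k (γ⁻¹ • y) ∂μ ∂μ
      = ∫⁻ x, ∫⁻ y, f (γ • x) * φ x y * k y ∂μ ∂μ := by
    rw [← lintegral_smul_eq_self μ _ γ]
    refine lintegral_congr fun x => ?_
    rw [← lintegral_smul_eq_self μ _ γ]
    simp only [hφ_inv, inv_smul_smul]
  calc ∫⁻ x, ∫⁻ y, f x * φ x y * orbitLIntegral ν k y ∂μ ∂μ
      = ∫⁻ x, ∫⁻ y, ∫⁻ γ, f x * φ x y * k (γ⁻¹ • y) ∂ν ∂μ ∂μ := by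
        refine lintegral_congr fun x => lintegral_congr fun y => ?_
        exact (lintegral_const_mul _ (by fun_prop)).symm
    _ = ∫⁻ γ, ∫⁻ x, ∫⁻ y, f x * φ x y * k (γ⁻¹ • y) ∂μ ∂μ ∂ν :=
        lintegral_lintegral_lintegral_rotate _ _ _ (by fun_prop)
    _ = ∫⁻ γ, ∫⁻ x, ∫⁻ y, f (γ • x) * φ x y * k y ∂μ ∂μ ∂ν := lintegral_congr hdiagonal
    _ = ∫⁻ x, ∫⁻ y, ∫⁻ γ, f (γ • x) * φ x y * k y ∂ν ∂μ ∂μ :=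
        (lintegral_lintegral_lintegral_rotate _ _ _ (by fun_prop)).symm
    _ = ∫⁻ x, ∫⁻ y, orbitLIntegral ν f x * φ x y * k y ∂μ ∂μ := by
        refine lintegral_congr fun x => lintegral_congr fun y => ?_
        simp only [mul_assoc, orbitLIntegral_eq_lintegral_smul]
        exact lintegral_mul_const _ (by fun_prop)

theorem lintegral_mass_transport [MeasurableMul Γ] [ν.IsMulLeftInvariant]
    (hf : Measurable f) (hk : Measurable k)
    (hf_pos : ∀ᵐ x ∂μ, orbitLIntegral ν f x ≠ 0) (hf_fin : ∀ᵐ x ∂μ, orbitLIntegral ν f x ≠ ∞)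
    (hk_pos : ∀ᵐ x ∂μ, orbitLIntegral ν k x ≠ 0) (hk_fin : ∀ᵐ x ∂μ, orbitLIntegral ν k x ≠ ∞)
    {g : X → X → ℝ≥0∞} (hg : Measurable (Function.uncurry g))
    (hg_inv : ∀ (γ : Γ) (x y : X), g (γ • x) (γ • y) = g x y) :
    ∫⁻ z, f z * ((orbitLIntegral ν f z)⁻¹ * ∫⁻ y, g z y ∂μ) ∂μ
      = ∫⁻ z, k z * ((orbitLIntegral ν k z)⁻¹ * ∫⁻ y, g y z ∂μ) ∂μ := by
  have hIf := measurable_orbitLIntegral ν hf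
  have hIk := measurable_orbitLIntegral ν hk
  set φ : X → X → ℝ≥0∞ :=
    fun x y => (orbitLIntegral ν f x)⁻¹ * (orbitLIntegral ν k y)⁻¹ * g x y with hφ_def
  have hφ_inv (γ : Γ) (x y : X) : φ (γ • x) (γ • y) = φ x y := by
    simp only [hφ_def, orbitLIntegral_smul, hg_inv]
  calc ∫⁻ x, f x * ((orbitLIntegral ν f x)⁻¹ * ∫⁻ y, g x y ∂μ) ∂μ
      = ∫⁻ x, ∫⁻ y, f x * φ x y * orbitLIntegral ν k y ∂μ ∂μ := by
        refine lintegral_congr fun x => ?_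
        rw [← mul_assoc, ← lintegral_const_mul _ (by fun_prop)]
        refine lintegral_congr_ae ?_
        filter_upwards [hk_pos, hk_fin] with y hpos hfin
        rw [← mul_one (_ * g x y), ← ENNReal.inv_mul_cancel hpos hfin]
        ring
    _ = ∫⁻ x, ∫⁻ y, orbitLIntegral ν f x * φ x y * k y ∂μ ∂μ :=
        lintegral_lintegral_mul_orbitLIntegral ν μ hf hk (by fun_prop) hφ_inv
    _ = ∫⁻ x, ∫⁻ y, k y * (orbitLIntegral ν k y)⁻¹ * g x y ∂μ ∂μ := by
        refine lintegral_congr_ae ?_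
        filter_upwards [hf_pos, hf_fin] with x hpos hfin
        refine lintegral_congr fun y => ?_
        rw [← mul_one (_ * g x y), ← ENNReal.inv_mul_cancel hpos hfin]
        ring
    _ = ∫⁻ y, ∫⁻ x, k y * (orbitLIntegral ν k y)⁻¹ * g x y ∂μ ∂μ :=
        lintegral_lintegral_swap (by fun_prop)
    _ = ∫⁻ y, k y * ((orbitLIntegral ν k y)⁻¹ * ∫⁻ x, g x y ∂μ) ∂μ := by
        refine lintegral_congr fun y => ?_
        rw [← mul_assoc, lintegral_const_mul _ (by fun_prop)]

end OrbitLIntegral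

theorem stmt2_general {Γ : Type*} [Group Γ] [MeasurableSpace Γ] [MeasurableMul Γ] [MeasurableInv Γ]
    {X : Type*} [MeasurableSpace X] [MulAction Γ X] [MeasurableSMul₂ Γ X]
    (ν : Measure Γ) [SFinite ν] [ν.IsMulLeftInvariant] [ν.IsInvInvariant]
    (μ : Measure X) [SFinite μ] [SMulInvariantMeasure Γ X μ]
    {B : Set X} (hB : MeasurableSet B)
    (hpos : ∀ᵐ x ∂μ, ν {γ : Γ | γ⁻¹ • x ∈ B} ≠ 0) (hfin : ∀ᵐ x ∂μ, ν {γ : Γ | γ⁻¹ • x ∈ B} ≠ ∞)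
    {g : X → X → ℝ≥0∞} (hg : Measurable (Function.uncurry g))
    (hg_inv : ∀ (γ : Γ) (x y : X), g (γ • x) (γ • y) = g x y) :
    ∫⁻ z in B, (ν {γ : Γ | γ⁻¹ • z ∈ B})⁻¹ * (∫⁻ y, g z y ∂μ) ∂μ
      = ∫⁻ z in B, (ν {γ : Γ | γ⁻¹ • z ∈ B})⁻¹ * (∫⁻ y, g y z ∂μ) ∂μ := by
  simp only [setLIntegral_eq_lintegral_indicator_one_mul μ hB,
    ← orbitLIntegral_indicator_one ν hB] at hpos hfin ⊢
  have hind : Measurable (B.indicator (1 : X → ℝ≥0∞)) := measurable_one.indicator hB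
  exact lintegral_mass_transport ν μ hind hind hpos hfin hpos hfin hg hg_inv

/-- In the setting of Statement 1, assume moreover that `Γ` is unimodular
(the left Haar measure is also right-invariant) and that `a := ∫_B h dμ ∈ (0,∞)`, where
`h x := ‖{γ | γ⁻¹ • x ∈ B}‖⁻¹`.  Then for every `Γ`-invariant measurable
`g : X × X → [0,∞]` one has
`∫_B h z (∫_X g z y dμ y) dμ z = ∫_B h z (∫_X g y z dμ y) dμ z`;
i.e. choosing the root with law `a⁻¹ (h μ)|_B` satisfies the mass transport principle. -/
theorem stmt2 {Γ : Type*} [Group Γ] [TopologicalSpace Γ] [IsTopologicalGroup Γ]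
    [LocallyCompactSpace Γ] [SigmaCompactSpace Γ] [T2Space Γ]
    [MeasurableSpace Γ] [BorelSpace Γ]
    {X : Type*} [MetricSpace X] [ProperSpace X] [MeasurableSpace X] [BorelSpace X]
    [MulAction Γ X] [ContinuousSMul Γ X]
    (haar : Measure Γ) [haar.IsHaarMeasure] [haar.IsMulRightInvariant]
    (μ : Measure X) (hμ0 : μ ≠ 0)
    (hμfin : ∀ s : Set X, Bornology.IsBounded s → μ s < ⊤)
    (hiso : ∀ γ : Γ, Isometry fun x : X => γ • x)
    (hpres : ∀ γ : Γ, Measure.map (fun x : X => γ • x) μ = μ)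
    (hproper : IsProperMap fun p : Γ × X => (p.1 • p.2, p.2))
    (B : Set X) (hBopen : IsOpen B)
    (hBmeet : ∀ x : X, (MulAction.orbit Γ x ∩ B).Nonempty)
    (hBbdd : ∀ x : X, Bornology.IsBounded (MulAction.orbit Γ x ∩ B))
    (hapos : 0 < ∫⁻ x in B, (haar {γ : Γ | γ⁻¹ • x ∈ B})⁻¹ ∂μ)
    (hafin : (∫⁻ x in B, (haar {γ : Γ | γ⁻¹ • x ∈ B})⁻¹ ∂μ) < ⊤) :
    ∀ g : X → X → ℝ≥0∞, Measurable (Function.uncurry g) →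
      (∀ (γ : Γ) (x y : X), g (γ • x) (γ • y) = g x y) →
      ∫⁻ z in B, (haar {γ : Γ | γ⁻¹ • z ∈ B})⁻¹ * (∫⁻ y, g z y ∂μ) ∂μ
        = ∫⁻ z in B, (haar {γ : Γ | γ⁻¹ • z ∈ B})⁻¹ * (∫⁻ y, g y z ∂μ) ∂μ := by
  intro g hg hg_inv
  have : IsFiniteMeasureOnCompacts μ := ⟨fun K hK => hμfin K hK.isBounded⟩
  have : ProperSMul Γ X := ⟨hproper⟩
  have : haar.IsInvInvariant := isInvInvariant_of_isMulRightInvariant_s2 haar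
  have : SMulInvariantMeasure Γ X μ := ((smulInvariantMeasure_tfae Γ μ).out 0 5).2 hpres
  exact stmt2_general haar μ hBopen.measurableSet
    (.of_forall fun x => measure_setOf_inv_smul_mem_ne_zero haar hBopen (hBmeet x))
    (.of_forall fun x => measure_setOf_inv_smul_mem_ne_top haar (hBbdd x).isCompact_closure)
    hg hg_inv
end
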